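/- Let n ≥ 2 and fix a permutation σ_O of {0,…,n−1}. Then the Λ-linear endomorphism ∂̃ of C̃ satisfies ∂̃ ∘ ∂̃ = 0; that is, (C̃, ∂̃) is a chain complex of Λ-modules. -/

import Mathlib

open Equiv
open scoped Classical

/-- Generator `z` as an element of the free group. -/
def zF (n : ℕ) : FreeGroup (Fin (n-1) ⊕ Unit) := FreeGroup.of (Sum.inr ())

/-- Generator `τ̃ᵢ` as an element of the free group. -/
def tF (n : ℕ) (i : Fin (n-1)) : FreeGroup (Fin (n-1) ⊕ Unit) := FreeGroup.of (Sum.inl i)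

/-- Relations of the spin extension of the symmetric group. -/
def spinRels (n : ℕ) : Set (FreeGroup (Fin (n-1) ⊕ Unit)) :=
  {zF n * zF n} ∪
  {w | ∃ i : Fin (n-1), w = zF n * tF n i * (tF n i * zF n)⁻¹} ∪
  {w | ∃ i : Fin (n-1), w = tF n i * tF n i * (zF n)⁻¹} ∪
  {w | ∃ i j : Fin (n-1), 1 < |(i : ℤ) - (j : ℤ)| ∧ w = tF n i * tF n j * (zF n * tF n j * tF n i)⁻¹} ∪
  {w | ∃ i j : Fin (n-1), (j : ℕ) = (i : ℕ) + 1 ∧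
        w = tF n i * tF n j * tF n i * (tF n j * tF n i * tF n j)⁻¹}

/-- The spin extension `S̃ₙ` of the symmetric group, as a presented group. -/
abbrev SpinSym (n : ℕ) := PresentedGroup (spinRels n)

/-- The central element `z` of `S̃ₙ`. -/
def zt (n : ℕ) : SpinSym n := PresentedGroup.of (Sum.inr ())

/-- The generator `τ̃ᵢ` of `S̃ₙ`. -/
def tt (n : ℕ) (i : Fin (n-1)) : SpinSym n := PresentedGroup.of (Sum.inl i)

/-- `i` as an element of `Fin n`. -/
def finL (n : ℕ) (i : Fin (n-1)) : Fin n := ⟨i, by have := i.2; omega⟩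

/-- `i+1` as an element of `Fin n`. -/
def finR (n : ℕ) (i : Fin (n-1)) : Fin n := ⟨(i : ℕ) + 1, by have := i.2; omega⟩

/-- `τ̃ₖ` for a natural number index, `1` out of range. -/
def ttN (n : ℕ) (k : ℕ) : SpinSym n := if h : k < n - 1 then tt n ⟨k, h⟩ else 1

/-- For `i ≤ j`, the word `τ̃ᵢ·τ̃ᵢ₊₁⋯τ̃ⱼ₋₂·τ̃ⱼ₋₁·τ̃ⱼ₋₂⋯τ̃ᵢ₊₁·τ̃ᵢ` (equal to `1` when `i = j`). -/
def ttilCore (n i j : ℕ) : SpinSym n :=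
  (((List.range' i (j - i)) ++ (List.range' i (j - 1 - i)).reverse).map (ttN n)).prod

/-- The lifted transpositions `τ̃_{i,j}`, with `τ̃_{j,i} = z·τ̃_{i,j}` for `i < j`,
and `τ̃_{k,k} = 1`. -/
def ttil (n i j : ℕ) : SpinSym n := if j < i then zt n * ttilCore n j i else ttilCore n i j

/-- The ground ring `Λ = ℤ[U_0, …, U_{n-1}]`. -/
abbrev Lam (n : ℕ) := MvPolynomial (Fin n) ℤ

/-- Emptiness of the rectangle `r(x; a, b)` on the toroidal grid determined by the
generator `x`: no `k ∉ {a, b}` lies in the open cyclic interval from `a` to `b`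
with `x k` in the open cyclic interval from `x a` to `x b`. -/
def RectEmpty (n : ℕ) (x : Equiv.Perm (Fin n)) (a b : Fin n) : Prop :=
  ∀ k : Fin n, k ≠ a → k ≠ b →
    ¬((k - a).val < (b - a).val ∧ (x k - x a).val < (x b - x a).val)

/-- `cntMark n σ x a b m = 1` if the marking placed (by `σ`) in column `m`, row `σ m`
lies in the rectangle `r(x; a, b)`, and `0` otherwise. -/
def cntMark (n : ℕ) (σ x : Equiv.Perm (Fin n)) (a b m : Fin n) : ℕ :=
  if (m - a).val < (b - a).val ∧ (σ m - x a).val < (x b - x a).val then 1 else 0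

/-- The monomial `∏ₘ Uₘ^{Oₘ(r(x;a,b))}` in `Λ`. -/
noncomputable def Umon (n : ℕ) (σO x : Equiv.Perm (Fin n)) (a b : Fin n) : Lam n :=
  ∏ m : Fin n, (MvPolynomial.X m) ^ (cntMark n σO x a b m)

/-- The relation `z + 1 = 0` on the monoid algebra `Λ[S̃ₙ]`. -/
def spinAlgRel (n : ℕ) :
    MonoidAlgebra (Lam n) (SpinSym n) → MonoidAlgebra (Lam n) (SpinSym n) → Prop :=
  fun u v => u = MonoidAlgebra.of (Lam n) (SpinSym n) (zt n) + 1 ∧ v = 0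

/-- The module `C̃`, the quotient of the monoid algebra `Λ[S̃ₙ]` by the two-sided
ideal generated by `z + 1`. -/
abbrev Ctil (n : ℕ) := RingQuot (spinAlgRel n)

/-- The class `[g] ∈ C̃` of a group element `g ∈ S̃ₙ`. -/
noncomputable def cls (n : ℕ) (g : SpinSym n) : Ctil n :=
  RingQuot.mkAlgHom (Lam n) (spinAlgRel n) (MonoidAlgebra.of (Lam n) (SpinSym n) g)

/-- `m` lies in the half-open cyclic interval from `a` to `b`. -/
def CycMem {n : ℕ} (a m b : Fin n) : Prop := (m - a).val < (b - a).val

theorem Fin.val_sub_eq_ite {n : ℕ} (a b : Fin n) :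
    (a - b).val = if b.val ≤ a.val then a.val - b.val else n + a.val - b.val := by
  split_ifs with h
  · exact Fin.sub_val_of_le h
  · exact Fin.coe_sub_iff_lt.2 (by simpa using h)

theorem cycMem_union {n : ℕ} {a b c : Fin n} (h : CycMem a c b) (m : Fin n) :
    CycMem a m b ↔ CycMem a m c ∨ CycMem c m b := by
  simp only [CycMem, Fin.val_sub_eq_ite] at *
  split_ifs at * <;> omega

theorem cycMem_disjoint {n : ℕ} {a b c : Fin n} (h : CycMem a c b) (m : Fin n) :
    ¬(CycMem a m c ∧ CycMem c m b) := by
  simp only [CycMem, Fin.val_sub_eq_ite] at *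
  split_ifs at * <;> omega

theorem cycMem_compl {n : ℕ} {a b : Fin n} (h : a ≠ b) (m : Fin n) :
    CycMem b m a ↔ ¬CycMem a m b := by
  have h' : a.val ≠ b.val := fun e => h (Fin.ext e)
  simp only [CycMem, Fin.val_sub_eq_ite] at *
  split_ifs at * <;> omega

theorem cycMem_rotate {n : ℕ} {a b c : Fin n} (hab : a ≠ b) (hac : a ≠ c) (hbc : b ≠ c) :
    CycMem a b c ↔ CycMem b c a := by
  have h1 : a.val ≠ b.val := fun e => hab (Fin.ext e)
  have h2 : a.val ≠ c.val := fun e => hac (Fin.ext e)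
  have h3 : b.val ≠ c.val := fun e => hbc (Fin.ext e)
  simp only [CycMem, Fin.val_sub_eq_ite] at *
  split_ifs at * <;> omega

theorem cycMem_swap {n : ℕ} {a b c : Fin n} (hbc : b ≠ c) :
    CycMem a c b ↔ ¬CycMem a b c := by
  have h3 : b.val ≠ c.val := fun e => hbc (Fin.ext e)
  simp only [CycMem, Fin.val_sub_eq_ite] at *
  split_ifs at * <;> omega

theorem rectEmpty_iff {n : ℕ} (x : Perm (Fin n)) {a b c : Fin n} (hca : c ≠ a) (hcb : c ≠ b) :
    RectEmpty n x a b ↔ ¬(CycMem a c b ∧ CycMem (x a) (x c) (x b)) ∧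
      ∀ k, k ≠ a → k ≠ b → k ≠ c → ¬(CycMem a k b ∧ CycMem (x a) (x k) (x b)) := by
  constructor
  · exact fun h => ⟨h c hca hcb, fun k h1 h2 _ => h k h1 h2⟩
  · rintro ⟨h1, h2⟩ k ha hb
    rcases eq_or_ne k c with rfl | hk
    · exact h1
    · exact h2 k ha hb hk

/-- The indicator function of a half-open cyclic interval. -/
noncomputable def cycInd {n : ℕ} (a b m : Fin n) : ℕ := if CycMem a m b then 1 else 0

theorem cycInd_add {n : ℕ} {a b c : Fin n} (h : CycMem a c b) (m : Fin n) :
    cycInd a b m = cycInd a c m + cycInd c b m := by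
  have h1 := cycMem_union h m
  have h2 := cycMem_disjoint h m
  unfold cycInd
  by_cases h3 : CycMem a m c <;> by_cases h4 : CycMem c m b <;> simp_all

theorem cycInd_compl {n : ℕ} {a b : Fin n} (h : a ≠ b) (m : Fin n) :
    cycInd a b m + cycInd b a m = 1 := by
  have h1 := cycMem_compl h m
  unfold cycInd
  by_cases h3 : CycMem a m b <;> simp_all

theorem cntMark_eq {n : ℕ} (σ x : Perm (Fin n)) (a b m : Fin n) :
    cntMark n σ x a b m = cycInd a b m * cycInd (x a) (x b) (σ m) := by
  unfold cntMark cycInd CycMem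
  split_ifs <;> simp_all

theorem Umon_mul {n : ℕ} (σ x y : Perm (Fin n)) (a b c d : Fin n) :
    Umon n σ x a b * Umon n σ y c d =
      ∏ m : Fin n, (MvPolynomial.X m) ^ (cntMark n σ x a b m + cntMark n σ y c d m) := by
  simp only [Umon, pow_add, Finset.prod_mul_distrib]

/-- A pair of consecutive empty rectangles `r(x; a, b)`, `r(x ∘ (a b); c, d)`. -/
def EmptyPair {n : ℕ} (x : Perm (Fin n)) (a b c d : Fin n) : Prop :=
  (a ≠ b ∧ RectEmpty n x a b) ∧ (c ≠ d ∧ RectEmpty n (x * swap a b) c d)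

/-- The monomial of a pair of consecutive rectangles. -/
noncomputable def pairMon {n : ℕ} (σ x : Perm (Fin n)) (a b c d : Fin n) : Lam n :=
  Umon n σ x a b * Umon n σ (x * swap a b) c d

section Matching

variable {n : ℕ} {x : Perm (Fin n)} {a b c : Fin n}

theorem emptyPair_iff_of_third {p q r : Fin n} (hab : a ≠ b) (hca : c ≠ a) (hcb : c ≠ b)
    (hpq : p ≠ q) (hrp : r ≠ p) (hrq : r ≠ q)
    (h : ∀ k, (k ≠ a ∧ k ≠ b ∧ k ≠ c) ↔ (k ≠ p ∧ k ≠ q ∧ k ≠ r)) :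
    EmptyPair x a b p q ↔ ¬(CycMem a c b ∧ CycMem (x a) (x c) (x b)) ∧
      ¬(CycMem p r q ∧ CycMem (x (swap a b p)) (x (swap a b r)) (x (swap a b q))) ∧
      ∀ k, (k ≠ a ∧ k ≠ b ∧ k ≠ c) →
        ¬(CycMem a k b ∧ CycMem (x a) (x k) (x b)) ∧
        ¬(CycMem p k q ∧ CycMem (x (swap a b p)) (x k) (x (swap a b q))) := by
  rw [EmptyPair, rectEmpty_iff x hca hcb, rectEmpty_iff (x * swap a b) hrp hrq]
  simp only [Perm.mul_apply]
  constructor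
  · rintro ⟨⟨-, h1, h2⟩, -, h3, h4⟩
    refine ⟨h1, h3, fun k hk => ⟨h2 k hk.1 hk.2.1 hk.2.2, ?_⟩⟩
    obtain ⟨kp, kq, kr⟩ := (h k).1 hk
    have := h4 k kp kq kr
    rwa [swap_apply_of_ne_of_ne hk.1 hk.2.1] at this
  · rintro ⟨h1, h3, h2⟩
    refine ⟨⟨hab, h1, fun k ka kb kc => (h2 k ⟨ka, kb, kc⟩).1⟩, hpq, h3, fun k kp kq kr => ?_⟩
    have hk := (h k).2 ⟨kp, kq, kr⟩
    rw [swap_apply_of_ne_of_ne hk.1 hk.2.1]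
    exact (h2 k hk).2

/-- The cyclic orders on three distinct points are determined by one of them. -/
theorem cycMem_triple (hab : a ≠ b) (hca : c ≠ a) (hcb : c ≠ b) :
    (CycMem b c a ↔ CycMem a b c) ∧ (CycMem c a b ↔ CycMem a b c) ∧
      (CycMem a c b ↔ ¬CycMem a b c) ∧ (CycMem b a c ↔ ¬CycMem a b c) ∧
      (CycMem c b a ↔ ¬CycMem a b c) := by
  have h1 := cycMem_rotate hab hca.symm hcb.symm
  have h2 := cycMem_rotate hcb.symm hab.symm hca
  have h3 := cycMem_swap (a := a) hcb.symm
  have h4 := cycMem_swap (a := b) hca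
  have h5 := cycMem_swap (a := c) hab
  tauto

theorem emptyPair_left_left (hab : a ≠ b) (hca : c ≠ a) (hcb : c ≠ b) :
    EmptyPair x a b a c ↔ CycMem (x a) (x b) (x c) ∧ ∀ k, (k ≠ a ∧ k ≠ b ∧ k ≠ c) →
      ¬(CycMem a k b ∧ CycMem (x a) (x k) (x b)) ∧
      ¬(CycMem a k c ∧ CycMem (x b) (x k) (x c)) := by
  have hc := cycMem_triple hab hca hcb
  have hr := cycMem_triple (x.injective.ne hab) (x.injective.ne hca) (x.injective.ne hcb)
  rw [emptyPair_iff_of_third hab hca hcb hca.symm hab.symm hcb.symm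
    (fun k => ⟨fun ⟨ha, hb, hc⟩ => ⟨ha, hc, hb⟩, fun ⟨ha, hc, hb⟩ => ⟨ha, hb, hc⟩⟩)]
  simp only [swap_apply_left, swap_apply_right, swap_apply_of_ne_of_ne hca hcb, hc, hr]
  clear hc hr
  tauto

theorem emptyPair_right_left (hab : a ≠ b) (hca : c ≠ a) (hcb : c ≠ b) :
    EmptyPair x a b c a ↔ CycMem a b c ∧ ∀ k, (k ≠ a ∧ k ≠ b ∧ k ≠ c) →
      ¬(CycMem a k b ∧ CycMem (x a) (x k) (x b)) ∧
      ¬(CycMem c k a ∧ CycMem (x c) (x k) (x b)) := by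
  have hc := cycMem_triple hab hca hcb
  have hr := cycMem_triple (x.injective.ne hab) (x.injective.ne hca) (x.injective.ne hcb)
  rw [emptyPair_iff_of_third hab hca hcb hca hcb.symm hab.symm
    (fun k => ⟨fun ⟨ha, hb, hc⟩ => ⟨hc, ha, hb⟩, fun ⟨hc, ha, hb⟩ => ⟨ha, hb, hc⟩⟩)]
  simp only [swap_apply_left, swap_apply_right, swap_apply_of_ne_of_ne hca hcb, hc, hr]
  clear hc hr
  tauto

theorem emptyPair_left_right (hab : a ≠ b) (hca : c ≠ a) (hcb : c ≠ b) :
    EmptyPair x a b b c ↔ CycMem a b c ∧ ∀ k, (k ≠ a ∧ k ≠ b ∧ k ≠ c) →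
      ¬(CycMem a k b ∧ CycMem (x a) (x k) (x b)) ∧
      ¬(CycMem b k c ∧ CycMem (x a) (x k) (x c)) := by
  have hc := cycMem_triple hab hca hcb
  have hr := cycMem_triple (x.injective.ne hab) (x.injective.ne hca) (x.injective.ne hcb)
  rw [emptyPair_iff_of_third hab hca hcb hcb.symm hab hca.symm
    (fun k => ⟨fun ⟨ha, hb, hc⟩ => ⟨hb, hc, ha⟩, fun ⟨hb, hc, ha⟩ => ⟨ha, hb, hc⟩⟩)]
  simp only [swap_apply_left, swap_apply_right, swap_apply_of_ne_of_ne hca hcb, hc, hr]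
  clear hc hr
  tauto

theorem emptyPair_right_right (hab : a ≠ b) (hca : c ≠ a) (hcb : c ≠ b) :
    EmptyPair x a b c b ↔ CycMem (x a) (x b) (x c) ∧ ∀ k, (k ≠ a ∧ k ≠ b ∧ k ≠ c) →
      ¬(CycMem a k b ∧ CycMem (x a) (x k) (x b)) ∧
      ¬(CycMem c k b ∧ CycMem (x c) (x k) (x a)) := by
  have hc := cycMem_triple hab hca hcb
  have hr := cycMem_triple (x.injective.ne hab) (x.injective.ne hca) (x.injective.ne hcb)
  rw [emptyPair_iff_of_third hab hca hcb hcb hca.symm hab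
    (fun k => ⟨fun ⟨ha, hb, hc⟩ => ⟨hc, hb, ha⟩, fun ⟨hc, hb, ha⟩ => ⟨ha, hb, hc⟩⟩)]
  simp only [swap_apply_left, swap_apply_right, swap_apply_of_ne_of_ne hca hcb, hc, hr]
  clear hc hr
  tauto

/-- Two ways of cutting an L-shaped region with a short upper left arm. -/
theorem emptyPair_matching_left_left_narrow (hab : a ≠ b) (hca : c ≠ a) (hcb : c ≠ b) :
    CycMem a c b ∧ EmptyPair x a b a c ↔ CycMem (x a) (x b) (x c) ∧ EmptyPair x a c c b := by
  rw [emptyPair_left_left hab hca hcb, emptyPair_left_right hca.symm hab.symm hcb.symm,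
    and_left_comm]
  refine and_congr_right fun hr => and_congr_right fun hc => forall_congr' fun k => ?_
  have h1 := cycMem_union hc k
  have h2 := cycMem_union hr (x k)
  tauto

theorem emptyPair_matching_left_left_wide (hab : a ≠ b) (hca : c ≠ a) (hcb : c ≠ b) :
    CycMem a b c ∧ EmptyPair x a b a c ↔ CycMem (x b) (x c) (x a) ∧ EmptyPair x b c a b := by
  rw [emptyPair_left_left hab hca hcb, emptyPair_right_left hcb.symm hab hca.symm,
    and_left_comm, (cycMem_triple hab hca hcb).1, (cycMem_triple (x.injective.ne hab)
      (x.injective.ne hca) (x.injective.ne hcb)).1]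
  refine and_congr_right fun hr => and_congr_right fun hc => forall_congr' fun k => ?_
  have h1 := cycMem_union hc k
  have h2 := cycMem_union hr (x k)
  tauto

theorem emptyPair_matching_right_right_narrow (hab : a ≠ b) (hca : c ≠ a) (hcb : c ≠ b) :
    CycMem a c b ∧ EmptyPair x a b c b ↔ CycMem (x c) (x a) (x b) ∧ EmptyPair x c b a c := by
  rw [emptyPair_right_right hab hca hcb, emptyPair_right_left hcb hca.symm hab,
    and_left_comm, ← (cycMem_triple (x.injective.ne hab)
      (x.injective.ne hca) (x.injective.ne hcb)).2.1, ← cycMem_rotate hca.symm hab hcb]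
  refine and_congr_right fun hr => and_congr_right fun hc => forall_congr' fun k => ?_
  have h1 := cycMem_union hc k
  have h2 := cycMem_union hr (x k)
  tauto

theorem emptyPair_matching_right_right_wide (hab : a ≠ b) (hca : c ≠ a) (hcb : c ≠ b) :
    CycMem a b c ∧ EmptyPair x a b c b ↔ CycMem (x c) (x a) (x b) ∧ EmptyPair x c a a b := by
  rw [emptyPair_right_right hab hca hcb, emptyPair_left_right hca hcb.symm hab.symm,
    and_left_comm, ← (cycMem_triple hab hca hcb).2.1, ← (cycMem_triple (x.injective.ne hab)
      (x.injective.ne hca) (x.injective.ne hcb)).2.1]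
  refine and_congr_right fun hr => and_congr_right fun hc => forall_congr' fun k => ?_
  have h1 := cycMem_union hc k
  have h2 := cycMem_union hr (x k)
  tauto

theorem pairMon_eq_of_cntMark {σ : Perm (Fin n)} {a b c d a' b' c' d' : Fin n}
    (h : ∀ m, cycInd a b m * cycInd (x a) (x b) (σ m) +
        cycInd c d m * cycInd (x (swap a b c)) (x (swap a b d)) (σ m) =
      cycInd a' b' m * cycInd (x a') (x b') (σ m) +
        cycInd c' d' m * cycInd (x (swap a' b' c')) (x (swap a' b' d')) (σ m)) :
    pairMon σ x a b c d = pairMon σ x a' b' c' d' := by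
  simp only [pairMon, Umon_mul, cntMark_eq, Perm.mul_apply, h]

theorem pairMon_matching_left_left_narrow (σ : Perm (Fin n)) (hab : a ≠ b) (hca : c ≠ a)
    (hcb : c ≠ b) (hc : CycMem a c b) (hr : CycMem (x a) (x b) (x c)) :
    pairMon σ x a b a c = pairMon σ x a c c b := by
  refine pairMon_eq_of_cntMark fun m => ?_
  simp only [swap_apply_left, swap_apply_right, swap_apply_of_ne_of_ne hca hcb,
    swap_apply_of_ne_of_ne hab.symm hcb.symm]
  rw [cycInd_add hc, cycInd_add hr]
  ring

theorem pairMon_matching_left_left_wide (σ : Perm (Fin n)) (hab : a ≠ b) (hca : c ≠ a)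
    (hcb : c ≠ b) (hc : CycMem a b c) (hr : CycMem (x a) (x b) (x c)) :
    pairMon σ x a b a c = pairMon σ x b c a b := by
  refine pairMon_eq_of_cntMark fun m => ?_
  simp only [swap_apply_left, swap_apply_of_ne_of_ne hca hcb,
    swap_apply_of_ne_of_ne hab hca.symm]
  rw [cycInd_add hc, cycInd_add hr]
  ring

theorem pairMon_matching_right_right_narrow (σ : Perm (Fin n)) (hab : a ≠ b) (hca : c ≠ a)
    (hcb : c ≠ b) (hc : CycMem a c b) (hr : CycMem (x c) (x a) (x b)) :
    pairMon σ x a b c b = pairMon σ x c b a c := by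
  refine pairMon_eq_of_cntMark fun m => ?_
  simp only [swap_apply_left, swap_apply_right, swap_apply_of_ne_of_ne hca hcb,
    swap_apply_of_ne_of_ne hca.symm hab]
  rw [cycInd_add hc, cycInd_add hr]
  ring

theorem pairMon_matching_right_right_wide (σ : Perm (Fin n)) (hab : a ≠ b) (hca : c ≠ a)
    (hcb : c ≠ b) (hc : CycMem c a b) (hr : CycMem (x c) (x a) (x b)) :
    pairMon σ x a b c b = pairMon σ x c a a b := by
  refine pairMon_eq_of_cntMark fun m => ?_
  simp only [swap_apply_right, swap_apply_of_ne_of_ne hca hcb,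
    swap_apply_of_ne_of_ne hcb.symm hab.symm]
  rw [cycInd_add hc, cycInd_add hr]
  ring

end Matching

section Disjoint

variable {n : ℕ} {x : Perm (Fin n)} {a b c d : Fin n}

theorem cycMem_of_separated (hca : c ≠ a) (hcb : c ≠ b) (hda : d ≠ a) (hdb : d ≠ b)
    (h : CycMem c a d) (h' : ¬CycMem c b d) : CycMem a d b ∧ CycMem b c a := by
  have e1 := Fin.val_ne_of_ne hca
  have e2 := Fin.val_ne_of_ne hcb
  have e3 := Fin.val_ne_of_ne hda
  have e4 := Fin.val_ne_of_ne hdb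
  clear hca hcb hda hdb
  simp only [CycMem, Fin.val_sub_eq_ite] at *
  split_ifs at h h' <;> split_ifs <;> omega

/-- If disjoint rectangles `r(x; a, b)` and `r(x ∘ (a b); c, d)` are empty, then so are
`r(x; c, d)` and `r(x ∘ (c d); a, b)`. -/
theorem emptyPair_disjoint_symm (hca : c ≠ a) (hcb : c ≠ b) (hda : d ≠ a) (hdb : d ≠ b)
    (h : EmptyPair x a b c d) : EmptyPair x c d a b := by
  obtain ⟨⟨hab, h1⟩, hcd, h2⟩ := h
  replace h1 : ∀ k, k ≠ a → k ≠ b → ¬(CycMem a k b ∧ CycMem (x a) (x k) (x b)) := h1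
  replace h2 : ∀ k, k ≠ c → k ≠ d → ¬(CycMem c k d ∧
      CycMem (x c) (x (swap a b k)) (x d)) := by
    intro k kc kd
    have := h2 k kc kd
    rw [Perm.mul_apply, Perm.mul_apply, Perm.mul_apply, swap_apply_of_ne_of_ne hca hcb,
      swap_apply_of_ne_of_ne hda hdb] at this
    exact this
  have A := h2 a hca.symm hda.symm
  have B := h2 b hcb.symm hdb.symm
  rw [swap_apply_left] at A
  rw [swap_apply_right] at B
  have C := h1 c hca hcb
  have D := h1 d hda hdb
  have xca := x.injective.ne hca
  have xcb := x.injective.ne hcb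
  have xda := x.injective.ne hda
  have xdb := x.injective.ne hdb
  refine ⟨⟨hcd, fun k kc kd => ?_⟩, hab, fun k ka kb => ?_⟩
  · rcases eq_or_ne k a with rfl | ka
    · rintro ⟨i1, i2⟩
      exact D ⟨(cycMem_of_separated hca hcb hda hdb i1 fun h => B ⟨h, i2⟩).1,
        (cycMem_of_separated xca xcb xda xdb i2 fun h => A ⟨i1, h⟩).1⟩
    rcases eq_or_ne k b with rfl | kb
    · rintro ⟨i1, i2⟩
      exact C ⟨(cycMem_of_separated hcb hca hdb hda i1 fun h => A ⟨h, i2⟩).2,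
        (cycMem_of_separated xcb xca xdb xda i2 fun h => B ⟨i1, h⟩).2⟩
    have := h2 k kc kd
    rwa [swap_apply_of_ne_of_ne ka kb] at this
  · rw [Perm.mul_apply, Perm.mul_apply, Perm.mul_apply, swap_apply_of_ne_of_ne hca.symm hda.symm,
      swap_apply_of_ne_of_ne hcb.symm hdb.symm]
    rcases eq_or_ne k c with rfl | kc
    · rw [swap_apply_left]
      rintro ⟨i1, i2⟩
      exact B ⟨(cycMem_of_separated ka.symm hda.symm kb.symm hdb.symm i1 fun h => D ⟨h, i2⟩).1,
        (cycMem_of_separated xda.symm xca.symm xdb.symm xcb.symm i2 fun h => C ⟨i1, h⟩).2⟩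
    rcases eq_or_ne k d with rfl | kd
    · rw [swap_apply_right]
      rintro ⟨i1, i2⟩
      exact A ⟨(cycMem_of_separated ka.symm hca.symm kb.symm hcb.symm i1 fun h => C ⟨h, i2⟩).2,
        (cycMem_of_separated xca.symm xda.symm xcb.symm xdb.symm i2 fun h => D ⟨i1, h⟩).1⟩
    rw [swap_apply_of_ne_of_ne kc kd]
    exact h1 k ka kb

theorem pairMon_disjoint (σ : Perm (Fin n)) (hca : c ≠ a) (hcb : c ≠ b) (hda : d ≠ a)
    (hdb : d ≠ b) : pairMon σ x a b c d = pairMon σ x c d a b := by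
  refine pairMon_eq_of_cntMark fun m => ?_
  rw [swap_apply_of_ne_of_ne hca hcb, swap_apply_of_ne_of_ne hda hdb,
    swap_apply_of_ne_of_ne hca.symm hda.symm, swap_apply_of_ne_of_ne hcb.symm hdb.symm, add_comm]

end Disjoint

section Annuli

variable {n : ℕ} {x : Perm (Fin n)} {a b : Fin n}

theorem cycMem_add_one [NeZero n] (hn : 2 ≤ n) (a m : Fin n) : CycMem a m (a + 1) ↔ m = a := by
  have h1 : (1 : Fin n).val = 1 := by rw [Fin.val_one', Nat.mod_eq_of_lt (by omega)]
  rw [CycMem, add_sub_cancel_left, h1, Nat.lt_one_iff, Fin.val_eq_zero_iff, sub_eq_zero]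

theorem eq_add_one_of_forall_not_cycMem [NeZero n] (hn : 2 ≤ n) (hab : a ≠ b)
    (h : ∀ k, k ≠ a → k ≠ b → ¬CycMem a k b) : b = a + 1 := by
  have h1 : (1 : Fin n).val = 1 := by rw [Fin.val_one', Nat.mod_eq_of_lt (by omega)]
  by_contra hb
  refine h (a + 1) (fun e => ?_) (Ne.symm hb) ?_
  · have := (add_eq_left.1 e)
    rw [this] at h1
    simp at h1
  · have h2 : (b - a).val ≠ 0 := fun e => hab (sub_eq_zero.1 (Fin.val_eq_zero_iff.1 e)).symm
    have h3 : (b - a).val ≠ 1 := fun e => hb (by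
      rw [← sub_eq_iff_eq_add']; exact Fin.ext (e.trans h1.symm))
    rw [CycMem, add_sub_cancel_left, h1]
    omega

theorem add_one_ne_self [NeZero n] (hn : 2 ≤ n) (a : Fin n) : a ≠ a + 1 := by
  intro e
  have h1 : (1 : Fin n).val = 1 := by rw [Fin.val_one', Nat.mod_eq_of_lt (by omega)]
  rw [add_eq_left.1 e.symm] at h1
  simp at h1

theorem emptyPair_vertical_annulus [NeZero n] (hn : 2 ≤ n) :
    EmptyPair x a b a b ↔ b = a + 1 := by
  constructor
  · rintro ⟨⟨hab, h1⟩, -, h2⟩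
    refine eq_add_one_of_forall_not_cycMem hn hab fun k ka kb hk => ?_
    have h3 : ¬CycMem (x a) (x k) (x b) := fun h => h1 k ka kb ⟨hk, h⟩
    have h4 := h2 k ka kb
    rw [Perm.mul_apply, Perm.mul_apply, Perm.mul_apply, swap_apply_left, swap_apply_right,
      swap_apply_of_ne_of_ne ka kb] at h4
    exact h4 ⟨hk, (cycMem_compl (x.injective.ne hab) _).2 h3⟩
  · rintro rfl
    have := add_one_ne_self hn a
    exact ⟨⟨this, fun k ka _ h => ka ((cycMem_add_one hn a k).1 h.1)⟩,
      this, fun k ka _ h => ka ((cycMem_add_one hn a k).1 h.1)⟩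

theorem emptyPair_horizontal_annulus [NeZero n] (hn : 2 ≤ n) :
    EmptyPair x a b b a ↔ x b = x a + 1 := by
  constructor
  · rintro ⟨⟨hab, h1⟩, -, h2⟩
    refine eq_add_one_of_forall_not_cycMem hn (x.injective.ne hab) fun r ra rb hr => ?_
    obtain ⟨k, rfl⟩ := x.surjective r
    have ka : k ≠ a := fun e => ra (congrArg x e)
    have kb : k ≠ b := fun e => rb (congrArg x e)
    have h3 : ¬CycMem a k b := fun h => h1 k ka kb ⟨h, hr⟩
    have h4 := h2 k kb ka
    rw [Perm.mul_apply, Perm.mul_apply, Perm.mul_apply, swap_apply_left, swap_apply_right,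
      swap_apply_of_ne_of_ne ka kb] at h4
    exact h4 ⟨(cycMem_compl hab _).2 h3, hr⟩
  · intro h
    have hab : a ≠ b := by
      rintro rfl
      exact add_one_ne_self hn _ h
    refine ⟨⟨hab, fun k ka _ hk => ?_⟩, hab.symm, fun k kb ka hk => ?_⟩
    · replace hk := hk.2
      rw [h] at hk
      exact ka (x.injective ((cycMem_add_one hn _ _).1 hk))
    · rw [Perm.mul_apply, Perm.mul_apply, Perm.mul_apply, swap_apply_left, swap_apply_right,
        swap_apply_of_ne_of_ne ka kb, h] at hk
      exact ka (x.injective ((cycMem_add_one hn _ _).1 hk.2))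

theorem cycInd_add_one [NeZero n] (hn : 2 ≤ n) (a m : Fin n) :
    cycInd a (a + 1) m = if m = a then 1 else 0 := by
  simp only [cycInd, cycMem_add_one hn]

theorem pairMon_vertical_annulus [NeZero n] (hn : 2 ≤ n) (σ : Perm (Fin n)) (h : b = a + 1) :
    pairMon σ x a b a b = MvPolynomial.X a := by
  have hab : a ≠ b := h ▸ add_one_ne_self hn a
  simp only [pairMon, Umon_mul, cntMark_eq, Perm.mul_apply, swap_apply_left, swap_apply_right,
    ← mul_add, cycInd_compl (x.injective.ne hab)]
  simp [h, cycInd_add_one hn, pow_ite]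

theorem pairMon_horizontal_annulus [NeZero n] (hn : 2 ≤ n) (σ : Perm (Fin n))
    (h : x b = x a + 1) : pairMon σ x a b b a = MvPolynomial.X (σ.symm (x a)) := by
  have hab : a ≠ b := by
    rintro rfl
    exact add_one_ne_self hn _ h
  simp only [pairMon, Umon_mul, cntMark_eq, Perm.mul_apply, swap_apply_left, swap_apply_right,
    ← add_mul, cycInd_compl hab]
  simp [h, cycInd_add_one hn, pow_ite, ← Equiv.eq_symm_apply]

end Annuli

section Sums

variable {n : ℕ} {R : Type*} [Ring R] [Algebra (Lam n) R]

/-- The formal properties of the signed lifts of transpositions, valid in any ring. -/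
structure IsSpinSystem (S : Fin n → Fin n → R) : Prop where
  antisymm : ∀ a b, a ≠ b → S b a = -S a b
  sq : ∀ a b, a ≠ b → S a b * S a b = -1
  anticomm : ∀ a b c d, a ≠ b → c ≠ d → c ≠ a → c ≠ b → d ≠ a → d ≠ b →
    S a b * S c d = -(S c d * S a b)
  cycle : ∀ a b c, a ≠ b → c ≠ a → c ≠ b → S a b * S b c = S c a * S a b

/-- The contribution of a pair of consecutive rectangles to the squared differential. -/
noncomputable def pairTerm (S : Fin n → Fin n → R) (σ x : Perm (Fin n)) (a b c d : Fin n) : R :=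
  if EmptyPair x a b c d then pairMon σ x a b c d • (S a b * S c d) else 0

theorem sum_split_quadruples {M : Type*} [AddCommMonoid M] (f : Fin n → Fin n → Fin n → Fin n → M)
    (h₁ : ∀ a c d, f a a c d = 0) (h₂ : ∀ a b c, f a b c c = 0) :
    ∑ a, ∑ b, ∑ c, ∑ d, f a b c d =
      (∑ a, ∑ b, ∑ c, ∑ d, if c ≠ a ∧ c ≠ b ∧ d ≠ a ∧ d ≠ b then f a b c d else 0) +
      (∑ a, ∑ b, f a b a b) + (∑ a, ∑ b, f a b b a) +
      (∑ a, ∑ b, ∑ c, if a ≠ b ∧ c ≠ a ∧ c ≠ b then f a b a c else 0) +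
      (∑ a, ∑ b, ∑ c, if a ≠ b ∧ c ≠ a ∧ c ≠ b then f a b c a else 0) +
      (∑ a, ∑ b, ∑ c, if a ≠ b ∧ c ≠ a ∧ c ≠ b then f a b b c else 0) +
      (∑ a, ∑ b, ∑ c, if a ≠ b ∧ c ≠ a ∧ c ≠ b then f a b c b else 0) := by
  simp only [← Finset.sum_add_distrib]
  refine Finset.sum_congr rfl fun a _ => Finset.sum_congr rfl fun b _ => ?_
  rcases eq_or_ne a b with rfl | hab
  · simp [h₁]
  have key : ∀ c d, f a b c d =
      (if c ≠ a ∧ c ≠ b ∧ d ≠ a ∧ d ≠ b then f a b c d else 0) +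
      (if c = a then if d = b then f a b a b else 0 else 0) +
      (if c = b then if d = a then f a b b a else 0 else 0) +
      (if c = a then if a ≠ b ∧ d ≠ a ∧ d ≠ b then f a b a d else 0 else 0) +
      (if d = a then if a ≠ b ∧ c ≠ a ∧ c ≠ b then f a b c a else 0 else 0) +
      (if c = b then if a ≠ b ∧ d ≠ a ∧ d ≠ b then f a b b d else 0 else 0) +
      (if d = b then if a ≠ b ∧ c ≠ a ∧ c ≠ b then f a b c b else 0 else 0) := by
    intro c d
    by_cases ca : c = a
    · subst ca
      by_cases da : d = c
      · subst da; simp [h₂, hab]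
      by_cases db : d = b
      · subst db; simp [hab]
      simp [*]
    by_cases cb : c = b
    · subst cb
      by_cases da : d = a
      · subst da; simp [hab, ca]
      by_cases db : d = c
      · subst db; simp [hab.symm, h₂]
      simp [*]
    by_cases da : d = a
    · subst da; simp [*]
    by_cases db : d = b
    · subst db; simp [*]
    simp [*]
  conv_lhs => enter [2, c, 2, d]; rw [key]
  simp only [Finset.sum_add_distrib]
  congr 1; congr 1; congr 1; congr 1; congr 1; congr 1
  · simp
  · simp
  · rw [Finset.sum_comm]; simp
  · simp
  · rw [Finset.sum_comm]; simp
  · simp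

variable {S : Fin n → Fin n → R} (σ x : Perm (Fin n))

theorem sum_pairTerm_disjoint (hS : IsSpinSystem S) :
    (∑ a, ∑ b, ∑ c, ∑ d, if c ≠ a ∧ c ≠ b ∧ d ≠ a ∧ d ≠ b then pairTerm S σ x a b c d else 0) =
      0 := by
  simp only [← Fintype.sum_prod_type']
  refine Finset.sum_involution (fun q _ => (q.2.2.1, q.2.2.2, q.1, q.2.1)) ?_ ?_
    (fun _ _ => Finset.mem_univ _) (fun _ _ => rfl)
  · rintro ⟨a, b, c, d⟩ -
    simp only
    by_cases h : c ≠ a ∧ c ≠ b ∧ d ≠ a ∧ d ≠ b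
    · obtain ⟨hca, hcb, hda, hdb⟩ := h
      rw [if_pos ⟨hca, hcb, hda, hdb⟩, if_pos ⟨hca.symm, hda.symm, hcb.symm, hdb.symm⟩]
      unfold pairTerm
      by_cases hE : EmptyPair x a b c d
      · rw [if_pos hE, if_pos (emptyPair_disjoint_symm hca hcb hda hdb hE),
          pairMon_disjoint σ hca hcb hda hdb,
          hS.anticomm a b c d hE.1.1 hE.2.1 hca hcb hda hdb, smul_neg, neg_add_cancel]
      · rw [if_neg hE, if_neg fun h => hE
          (emptyPair_disjoint_symm hca.symm hda.symm hcb.symm hdb.symm h), add_zero]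
    · rw [if_neg h, if_neg fun h' => h ⟨h'.1.symm, h'.2.2.1.symm, h'.2.1.symm, h'.2.2.2.symm⟩,
        add_zero]
  · rintro ⟨a, b, c, d⟩ - h e
    simp only [Prod.mk.injEq] at e
    exact h (if_neg fun h' => h'.1 e.1)

theorem sum_pairTerm_annuli (hS : IsSpinSystem S) (hn : 2 ≤ n) :
    (∑ a, ∑ b, pairTerm S σ x a b a b) + (∑ a, ∑ b, pairTerm S σ x a b b a) = 0 := by
  have : NeZero n := ⟨by omega⟩
  have hv : ∀ a b, pairTerm S σ x a b a b =
      if b = a + 1 then -((MvPolynomial.X a : Lam n) • (1 : R)) else 0 := by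
    intro a b
    simp only [pairTerm, emptyPair_vertical_annulus hn]
    split_ifs with h
    · rw [pairMon_vertical_annulus hn σ h, hS.sq a b (h ▸ add_one_ne_self hn a), smul_neg]
    · rfl
  have hh : ∀ a b, pairTerm S σ x a b b a =
      if b = x.symm (x a + 1) then (MvPolynomial.X (σ.symm (x a)) : Lam n) • (1 : R) else 0 := by
    intro a b
    simp only [pairTerm, emptyPair_horizontal_annulus hn, Equiv.eq_symm_apply]
    split_ifs with h
    · have hab : a ≠ b := by
        rintro rfl
        exact add_one_ne_self hn _ h
      rw [pairMon_horizontal_annulus hn σ h, hS.antisymm a b hab, mul_neg, hS.sq a b hab, neg_neg]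
    · rfl
  simp only [hv, hh, Finset.sum_ite_eq', Finset.mem_univ, if_true, Finset.sum_neg_distrib]
  rw [← Equiv.sum_comp (x.trans σ.symm) (fun a => (MvPolynomial.X a : Lam n) • (1 : R))]
  simp

theorem ite_pairTerm_eq_neg {a b c d a' b' c' d' : Fin n} {P Q : Prop}
    (h : P ∧ EmptyPair x a b c d ↔ Q ∧ EmptyPair x a' b' c' d')
    (hm : P → EmptyPair x a b c d → pairMon σ x a b c d = pairMon σ x a' b' c' d')
    (hs : S a b * S c d = -(S a' b' * S c' d')) :
    (if P then pairTerm S σ x a b c d else 0) = -(if Q then pairTerm S σ x a' b' c' d' else 0) := by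
  simp only [pairTerm, ← ite_and, h]
  split_ifs with hQ
  · obtain ⟨hP, hE⟩ := h.2 hQ
    rw [hm hP hE, hs, smul_neg]
  · rw [neg_zero]

theorem pairTerm_matching_left_left_narrow (hS : IsSpinSystem S) {a b c : Fin n} (hab : a ≠ b)
    (hca : c ≠ a) (hcb : c ≠ b) : (if CycMem a c b then pairTerm S σ x a b a c else 0) =
      -(if CycMem (x a) (x b) (x c) then pairTerm S σ x a c c b else 0) := by
  refine ite_pairTerm_eq_neg σ x (emptyPair_matching_left_left_narrow hab hca hcb)
    (fun hc hE => pairMon_matching_left_left_narrow σ hab hca hcb hc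
      ((emptyPair_left_left hab hca hcb).1 hE).1) ?_
  rw [hS.cycle a c b hca.symm hab.symm hcb.symm, hS.antisymm a b hab, neg_mul, neg_neg]

theorem pairTerm_matching_left_left_wide (hS : IsSpinSystem S) {a b c : Fin n} (hab : a ≠ b)
    (hca : c ≠ a) (hcb : c ≠ b) : (if CycMem a b c then pairTerm S σ x a b a c else 0) =
      -(if CycMem (x b) (x c) (x a) then pairTerm S σ x b c a b else 0) := by
  refine ite_pairTerm_eq_neg σ x (emptyPair_matching_left_left_wide hab hca hcb)
    (fun hc hE => pairMon_matching_left_left_wide σ hab hca hcb hc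
      ((emptyPair_left_left hab hca hcb).1 hE).1) ?_
  rw [hS.antisymm c b hcb, hS.antisymm b a hab.symm, neg_mul_neg, neg_mul,
    hS.cycle c b a hcb hca.symm hab, hS.cycle a c b hca.symm hab.symm hcb.symm]

theorem pairTerm_matching_right_right_narrow (hS : IsSpinSystem S) {a b c : Fin n} (hab : a ≠ b)
    (hca : c ≠ a) (hcb : c ≠ b) : (if CycMem a c b then pairTerm S σ x a b c b else 0) =
      -(if CycMem (x c) (x a) (x b) then pairTerm S σ x c b a c else 0) := by
  refine ite_pairTerm_eq_neg σ x (emptyPair_matching_right_right_narrow hab hca hcb)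
    (fun hc hE => pairMon_matching_right_right_narrow σ hab hca hcb hc
      (((cycMem_triple (x.injective.ne hab) (x.injective.ne hca) (x.injective.ne hcb)).2.1).2
        ((emptyPair_right_right hab hca hcb).1 hE).1)) ?_
  rw [hS.antisymm b c hcb.symm, hS.antisymm c a hca, neg_mul_neg, mul_neg,
    hS.cycle a b c hab hca hcb, hS.cycle c a b hca hcb.symm hab.symm]

theorem pairTerm_matching_right_right_wide (hS : IsSpinSystem S) {a b c : Fin n} (hab : a ≠ b)
    (hca : c ≠ a) (hcb : c ≠ b) : (if CycMem a b c then pairTerm S σ x a b c b else 0) =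
      -(if CycMem (x c) (x a) (x b) then pairTerm S σ x c a a b else 0) := by
  refine ite_pairTerm_eq_neg σ x (emptyPair_matching_right_right_wide hab hca hcb)
    (fun hc hE => pairMon_matching_right_right_wide σ hab hca hcb
      ((cycMem_triple hab hca hcb).2.1.2 hc)
      (((cycMem_triple (x.injective.ne hab) (x.injective.ne hca) (x.injective.ne hcb)).2.1).2
        ((emptyPair_right_right hab hca hcb).1 hE).1)) ?_
  rw [hS.antisymm b c hcb.symm, mul_neg, hS.cycle a b c hab hca hcb]

theorem ite_add_ite_not_of_iff {M : Type*} [AddCommMonoid M] {P Q : Prop} (h : Q ↔ ¬P) (u : M) :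
    u = (if P then u else 0) + (if Q then u else 0) := by
  by_cases hP : P <;> simp [h, hP]

/-- The contributions of the overlapping pairs cancel. -/
theorem sum_pairTerm_overlapping (hS : IsSpinSystem S) :
    (∑ a, ∑ b, ∑ c, if a ≠ b ∧ c ≠ a ∧ c ≠ b then pairTerm S σ x a b a c else 0) +
    (∑ a, ∑ b, ∑ c, if a ≠ b ∧ c ≠ a ∧ c ≠ b then pairTerm S σ x a b c a else 0) +
    (∑ a, ∑ b, ∑ c, if a ≠ b ∧ c ≠ a ∧ c ≠ b then pairTerm S σ x a b b c else 0) +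
    (∑ a, ∑ b, ∑ c, if a ≠ b ∧ c ≠ a ∧ c ≠ b then pairTerm S σ x a b c b else 0) = 0 := by
  obtain ⟨F, hF⟩ : ∃ F : (Fin n → Fin n → Fin n → R) → Fin n → Fin n → Fin n → R,
      ∀ t a b c, F t a b c = if a ≠ b ∧ c ≠ a ∧ c ≠ b then t a b c else 0 := ⟨_, fun _ _ _ _ => rfl⟩
  have hF' : ∀ t a b c, a ≠ b → c ≠ a → c ≠ b → F t a b c = t a b c := fun t a b c h₁ h₂ h₃ => by
    rw [hF, if_pos ⟨h₁, h₂, h₃⟩]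
  have hF₀ : ∀ t a b c, ¬(a ≠ b ∧ c ≠ a ∧ c ≠ b) → F t a b c = 0 := fun t a b c h => by
    rw [hF, if_neg h]
  simp only [← hF (fun a b c => pairTerm S σ x a b a c), ← hF (fun a b c => pairTerm S σ x a b c a),
    ← hF (fun a b c => pairTerm S σ x a b b c), ← hF (fun a b c => pairTerm S σ x a b c b)]
  let c₁ := F fun a b c => if CycMem (x a) (x c) (x b) then pairTerm S σ x a b b c else 0
  let c₂ := F fun a b c => if CycMem (x a) (x b) (x c) then pairTerm S σ x a b b c else 0
  let b₁ := F fun a b c => if CycMem (x a) (x c) (x b) then pairTerm S σ x a b c a else 0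
  let b₂ := F fun a b c => if CycMem (x a) (x b) (x c) then pairTerm S σ x a b c a else 0
  have hC : ∀ a b c, F (fun a b c => pairTerm S σ x a b b c) a b c = c₁ a b c + c₂ a b c := by
    intro a b c
    by_cases h : a ≠ b ∧ c ≠ a ∧ c ≠ b
    · obtain ⟨hab, hca, hcb⟩ := h
      simp only [c₁, c₂, hF' _ a b c hab hca hcb]
      exact ite_add_ite_not_of_iff (cycMem_swap (x.injective.ne hcb)) _
    · simp only [c₁, c₂, hF₀ _ a b c h, add_zero]
  have hB : ∀ a b c, F (fun a b c => pairTerm S σ x a b c a) a b c = b₁ a b c + b₂ a b c := by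
    intro a b c
    by_cases h : a ≠ b ∧ c ≠ a ∧ c ≠ b
    · obtain ⟨hab, hca, hcb⟩ := h
      simp only [b₁, b₂, hF' _ a b c hab hca hcb]
      exact ite_add_ite_not_of_iff (cycMem_swap (x.injective.ne hcb)) _
    · simp only [b₁, b₂, hF₀ _ a b c h, add_zero]
  have hA : ∀ a b c, F (fun a b c => pairTerm S σ x a b a c) a b c =
      -c₁ a c b + -b₂ b c a := by
    intro a b c
    by_cases h : a ≠ b ∧ c ≠ a ∧ c ≠ b
    · obtain ⟨hab, hca, hcb⟩ := h
      simp only [c₁, b₂, hF' _ a b c hab hca hcb, hF' _ a c b hca.symm hab.symm hcb.symm,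
        hF' _ b c a hcb.symm hab hca.symm]
      rw [← pairTerm_matching_left_left_narrow σ x hS hab hca hcb,
        ← pairTerm_matching_left_left_wide σ x hS hab hca hcb]
      exact ite_add_ite_not_of_iff (cycMem_swap hcb) _
    · simp only [c₁, b₂, hF₀ _ a b c h, hF₀ _ a c b (fun h' => h ⟨h'.2.1.symm, h'.1.symm,
        h'.2.2.symm⟩), hF₀ _ b c a (fun h' => h ⟨h'.2.1, h'.2.2.symm, h'.1.symm⟩), neg_zero,
        add_zero]
  have hD : ∀ a b c, F (fun a b c => pairTerm S σ x a b c b) a b c =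
      -b₁ c b a + -c₂ c a b := by
    intro a b c
    by_cases h : a ≠ b ∧ c ≠ a ∧ c ≠ b
    · obtain ⟨hab, hca, hcb⟩ := h
      simp only [b₁, c₂, hF' _ a b c hab hca hcb, hF' _ c b a hcb hca.symm hab,
        hF' _ c a b hca hcb.symm hab.symm]
      rw [← pairTerm_matching_right_right_narrow σ x hS hab hca hcb,
        ← pairTerm_matching_right_right_wide σ x hS hab hca hcb]
      exact ite_add_ite_not_of_iff (cycMem_swap hcb) _
    · simp only [b₁, c₂, hF₀ _ a b c h, hF₀ _ c b a (fun h' => h ⟨h'.2.2, h'.2.1.symm, h'.1⟩),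
        hF₀ _ c a b (fun h' => h ⟨h'.2.2.symm, h'.1, h'.2.1.symm⟩), neg_zero, add_zero]
  have sum_acb (t : Fin n → Fin n → Fin n → R) :
      ∑ a, ∑ b, ∑ c, t a c b = ∑ a, ∑ b, ∑ c, t a b c :=
    Finset.sum_congr rfl fun _ _ => Finset.sum_comm
  have sum_bac (t : Fin n → Fin n → Fin n → R) :
      ∑ a, ∑ b, ∑ c, t b a c = ∑ a, ∑ b, ∑ c, t a b c := Finset.sum_comm
  have sum_bca (t : Fin n → Fin n → Fin n → R) :
      ∑ a, ∑ b, ∑ c, t b c a = ∑ a, ∑ b, ∑ c, t a b c :=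
    (sum_bac fun a b c => t a c b).trans (sum_acb t)
  have sum_cab (t : Fin n → Fin n → Fin n → R) :
      ∑ a, ∑ b, ∑ c, t c a b = ∑ a, ∑ b, ∑ c, t a b c :=
    (sum_acb fun a b c => t b a c).trans (sum_bac t)
  have sum_cba (t : Fin n → Fin n → Fin n → R) :
      ∑ a, ∑ b, ∑ c, t c b a = ∑ a, ∑ b, ∑ c, t a b c :=
    (sum_bac fun a b c => t c a b).trans (sum_cab t)
  simp only [hA, hB, hC, hD, Finset.sum_add_distrib, Finset.sum_neg_distrib, sum_acb c₁,
    sum_bca b₂, sum_cba b₁, sum_cab c₂]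
  abel

/-- The contributions of all pairs of consecutive rectangles cancel. -/
theorem sum_pairTerm (hS : IsSpinSystem S) (hn : 2 ≤ n) :
    ∑ a, ∑ b, ∑ c, ∑ d, pairTerm S σ x a b c d = 0 := by
  rw [sum_split_quadruples _ (fun a c d => if_neg fun h => h.1.1 rfl)
    (fun a b c => if_neg fun h => h.2.1 rfl), sum_pairTerm_disjoint σ x hS, zero_add,
    sum_pairTerm_annuli σ x hS hn, zero_add]
  exact sum_pairTerm_overlapping σ x hS

end Sums

section SpinRelations

variable (n : ℕ)

theorem eq_of_mul_inv_mem_spinRels {u v : FreeGroup (Fin (n-1) ⊕ Unit)}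
    (h : u * v⁻¹ ∈ spinRels n) :
    (PresentedGroup.mk (spinRels n) u) = PresentedGroup.mk (spinRels n) v := by
  have := PresentedGroup.one_of_mem h
  rwa [map_mul, map_inv, mul_inv_eq_one] at this

theorem tt_mul_self (i : Fin (n-1)) : tt n i * tt n i = zt n := by
  have := eq_of_mul_inv_mem_spinRels n (u := tF n i * tF n i) (v := zF n)
    (Or.inl (Or.inl (Or.inr ⟨i, rfl⟩)))
  exact this

theorem tt_mul_tt_of_far {i j : Fin (n-1)} (h : 1 < |(i : ℤ) - (j : ℤ)|) :
    tt n i * tt n j = zt n * tt n j * tt n i :=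
  eq_of_mul_inv_mem_spinRels n (u := tF n i * tF n j) (v := zF n * tF n j * tF n i)
    (Or.inl (Or.inr ⟨i, j, h, rfl⟩))

theorem tt_braid {i j : Fin (n-1)} (h : (j : ℕ) = (i : ℕ) + 1) :
    tt n i * tt n j * tt n i = tt n j * tt n i * tt n j :=
  eq_of_mul_inv_mem_spinRels n (u := tF n i * tF n j * tF n i) (v := tF n j * tF n i * tF n j)
    (Or.inr ⟨i, j, h, rfl⟩)

variable {n} {R : Type*} [Ring R] (f : SpinSym n →* R)

/-- The image of a generator, indexed by a natural number. -/
def tgen (k : ℕ) : R := f (ttN n k)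

variable {f}

theorem tgen_mul_self (hf : f (zt n) = -1)
    {i : ℕ} (hi : i + 1 < n) : tgen f i * tgen f i = -1 := by
  have h : i < n - 1 := by omega
  simp only [tgen, ttN, h, dite_true, ← map_mul, tt_mul_self, hf]

theorem tgen_anticomm (hf : f (zt n) = -1)
    {i j : ℕ} (hi : i + 1 < n) (hj : j + 1 < n) (h : i + 1 < j ∨ j + 1 < i) :
    tgen f i * tgen f j = -(tgen f j * tgen f i) := by
  have h1 : i < n - 1 := by omega
  have h2 : j < n - 1 := by omega
  simp only [tgen, ttN, h1, h2, dite_true]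
  rw [← map_mul, tt_mul_tt_of_far, map_mul, map_mul, hf, neg_one_mul, neg_mul]
  rw [lt_abs]
  simp only
  omega

theorem tgen_braid {i : ℕ} (hi : i + 2 < n) :
    tgen f i * tgen f (i + 1) * tgen f i = tgen f (i + 1) * tgen f i * tgen f (i + 1) := by
  have h1 : i < n - 1 := by omega
  have h2 : i + 1 < n - 1 := by omega
  simp only [tgen, ttN, h1, h2, dite_true, ← map_mul]
  rw [tt_braid]
  rfl

theorem ttilCore_succ (i : ℕ) : ttilCore n i (i + 1) = ttN n i := by
  simp [ttilCore]

theorem ttilCore_step {i j : ℕ} (h : i + 1 < j) :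
    ttilCore n i j = ttN n i * ttilCore n (i + 1) j * ttN n i := by
  obtain ⟨k, rfl⟩ : ∃ k, j = i + 2 + k := ⟨j - (i + 2), by omega⟩
  have e1 : i + 2 + k - i = k + 1 + 1 := by omega
  have e2 : i + 2 + k - 1 - i = k + 1 := by omega
  have e3 : i + 2 + k - (i + 1) = k + 1 := by omega
  have e4 : i + 2 + k - 1 - (i + 1) = k := by omega
  rw [ttilCore, ttilCore, e1, e2, e3, e4, List.range'_succ (n := k + 1)]
  rw [List.range'_succ (n := k) (s := i)]
  simp [mul_assoc]

variable (f) in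
/-- The image of the tlift of the transposition of `i < j`. -/
def tcore (i j : ℕ) : R := f (ttilCore n i j)

theorem tcore_succ (i : ℕ) : tcore f i (i + 1) = tgen f i := by
  rw [tcore, ttilCore_succ, tgen]

theorem tcore_step {i j : ℕ} (h : i + 1 < j) :
    tcore f i j = tgen f i * tcore f (i + 1) j * tgen f i := by
  rw [tcore, ttilCore_step h, map_mul, map_mul, tgen, tcore]

variable (f) in
/-- The image of `ttil`. -/
def tlift (i j : ℕ) : R := f (ttil n i j)

theorem tlift_of_lt {i j : ℕ} (h : i < j) : tlift f i j = tcore f i j := by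
  rw [tlift, ttil, if_neg (by omega), tcore]

theorem tlift_of_gt (hf : f (zt n) = -1)
    {i j : ℕ} (h : j < i) : tlift f i j = -tcore f j i := by
  rw [tlift, ttil, if_pos h, map_mul, hf, neg_one_mul, tcore]

theorem tlift_antisymm (hf : f (zt n) = -1)
    {i j : ℕ} (h : i ≠ j) : tlift f j i = -tlift f i j := by
  rcases lt_or_gt_of_ne h with h | h
  · rw [tlift_of_lt h, tlift_of_gt hf h]
  · rw [tlift_of_lt h, tlift_of_gt hf h, neg_neg]

theorem tcore_mul_self (hf : f (zt n) = -1)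
    {i j : ℕ} (h : i < j) (hj : j < n) : tcore f i j * tcore f i j = -1 := by
  obtain ⟨k, rfl⟩ : ∃ k, j = i + 1 + k := ⟨j - (i + 1), by omega⟩
  clear h
  induction k generalizing i with
  | zero => rw [add_zero, tcore_succ, tgen_mul_self hf (by omega)]
  | succ k ih =>
    have := ih (i := i + 1) (by omega)
    rw [show i + 1 + 1 + k = i + 1 + (k + 1) by omega] at this
    have hg := tgen_mul_self hf (i := i) (by omega)
    rw [tcore_step (by omega)]
    calc _ = tgen f i * tcore f (i + 1) (i + 1 + (k + 1)) * (tgen f i * tgen f i) *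
          tcore f (i + 1) (i + 1 + (k + 1)) * tgen f i := by simp only [mul_assoc]
      _ = -(tgen f i * (tcore f (i + 1) (i + 1 + (k + 1)) *
          tcore f (i + 1) (i + 1 + (k + 1))) * tgen f i) := by
        rw [hg]; simp [mul_assoc]
      _ = -1 := by rw [this]; simp [hg]

theorem tgen_mul_tcore_of_far (hf : f (zt n) = -1)
    {i a b : ℕ} (hab : a < b) (hb : b < n) (hi : i + 1 < n)
    (h : i + 1 < a ∨ b < i) : tgen f i * tcore f a b = -(tcore f a b * tgen f i) := by
  obtain ⟨k, rfl⟩ : ∃ k, b = a + 1 + k := ⟨b - (a + 1), by omega⟩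
  clear hab
  induction k generalizing a with
  | zero => rw [add_zero, tcore_succ, tgen_anticomm hf hi (by omega) (by omega)]
  | succ k ih =>
    have e : a + 1 + 1 + k = a + 1 + (k + 1) := by omega
    have := ih (a := a + 1) (by omega) (by omega)
    rw [e] at this
    rw [tcore_step (by omega)]
    have hg := tgen_anticomm hf (i := i) (j := a) hi (by omega) (by omega)
    simp only [← mul_assoc]
    rw [hg, neg_mul, neg_mul, mul_assoc (tgen f a), this, mul_assoc _ _ (tgen f i),
      ← neg_eq_iff_eq_neg.2 hg]
    simp [mul_assoc]

theorem tgen_mul_tcore_inner (hf : f (zt n) = -1)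
    {i a b : ℕ} (ha : a < i) (hi : i + 1 < b) (hb : b < n) :
    tgen f i * tcore f a b = -(tcore f a b * tgen f i) := by
  obtain ⟨k, rfl⟩ : ∃ k, i = a + 1 + k := ⟨i - (a + 1), by omega⟩
  clear ha
  induction k generalizing a with
  | zero =>
    rw [add_zero] at *
    have hbr := tgen_braid (f := f) (i := a) (by omega)
    have hf := tgen_mul_tcore_of_far hf (i := a) (a := a + 1 + 1) (b := b) (by omega) hb
      (by omega) (by omega)
    rw [tcore_step (by omega), tcore_step (by omega)]
    calc tgen f (a + 1) * (tgen f a * (tgen f (a + 1) * tcore f (a + 1 + 1) b * tgen f (a + 1)) *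
            tgen f a)
        = (tgen f (a + 1) * tgen f a * tgen f (a + 1)) * tcore f (a + 1 + 1) b * tgen f (a + 1) *
            tgen f a := by simp only [mul_assoc]
      _ = tgen f a * tgen f (a + 1) * (tgen f a * tcore f (a + 1 + 1) b) * tgen f (a + 1) *
            tgen f a := by rw [← hbr]; simp only [mul_assoc]
      _ = -(tgen f a * tgen f (a + 1) * tcore f (a + 1 + 1) b *
            (tgen f a * tgen f (a + 1) * tgen f a)) := by rw [hf]; simp [mul_assoc]
      _ = _ := by rw [hbr]; simp only [mul_assoc]
  | succ k ih =>
    have e : a + 1 + 1 + k = a + 1 + (k + 1) := by omega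
    have := ih (a := a + 1) (by omega)
    rw [e] at this
    rw [tcore_step (by omega)]
    have hg := tgen_anticomm hf (i := a + 1 + (k + 1)) (j := a) (by omega) (by omega)
      (by omega)
    simp only [← mul_assoc]
    rw [hg, neg_mul, neg_mul, mul_assoc (tgen f a), this, mul_assoc _ _ (tgen f (a + 1 + (k + 1))),
      ← neg_eq_iff_eq_neg.2 hg]
    simp [mul_assoc]

theorem tgen_mul_tcore_last (hf : f (zt n) = -1) {i a : ℕ} (ha : a < i) (hi : i + 1 < n) :
    tgen f i * tcore f a (i + 1) = -(tcore f a i * tgen f i) := by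
  obtain ⟨k, rfl⟩ : ∃ k, i = a + 1 + k := ⟨i - (a + 1), by omega⟩
  clear ha
  induction k generalizing a with
  | zero =>
    rw [add_zero] at *
    have hbr := tgen_braid (f := f) (i := a) (by omega)
    have hg := tgen_mul_self hf (i := a) (by omega)
    rw [tcore_step (by omega), tcore_succ, tcore_succ]
    calc tgen f (a + 1) * (tgen f a * tgen f (a + 1) * tgen f a)
        = (tgen f (a + 1) * tgen f a * tgen f (a + 1)) * tgen f a := by simp only [mul_assoc]
      _ = tgen f a * tgen f (a + 1) * (tgen f a * tgen f a) := by rw [← hbr]; simp only [mul_assoc]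
      _ = _ := by rw [hg]; simp
  | succ k ih =>
    have e : a + 1 + 1 + k = a + 1 + (k + 1) := by omega
    have := ih (a := a + 1) (by omega)
    rw [e] at this
    rw [tcore_step (by omega), tcore_step (j := a + 1 + (k + 1)) (by omega)]
    have hg := tgen_anticomm hf (i := a + 1 + (k + 1)) (j := a) (by omega) (by omega)
      (by omega)
    simp only [← mul_assoc]
    rw [hg, neg_mul, neg_mul, mul_assoc (tgen f a), this, mul_assoc _ _ (tgen f (a + 1 + (k + 1))),
      ← neg_eq_iff_eq_neg.2 hg]
    simp [mul_assoc]

theorem tgen_mul_tcore (hf : f (zt n) = -1)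
    {i a b : ℕ} (hab : a < b) (hb : b < n) (hi : i + 1 < n) :
    tgen f i * tcore f a b = -(tlift f (swap i (i + 1) a) (swap i (i + 1) b) * tgen f i) := by
  have hg := tgen_mul_self hf hi
  by_cases h1 : i + 1 < a ∨ b < i
  · rw [swap_apply_of_ne_of_ne (by omega) (by omega), swap_apply_of_ne_of_ne (by omega) (by omega),
      tlift_of_lt hab, tgen_mul_tcore_of_far hf hab hb hi h1]
  by_cases h2 : i + 1 = a
  · subst h2
    rw [swap_apply_right, swap_apply_of_ne_of_ne (by omega) (by omega), tlift_of_lt (by omega),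
      tcore_step hab, mul_assoc _ (tgen f i) (tgen f i), hg]
    simp
  by_cases h3 : i = a
  · subst h3
    by_cases h4 : b = i + 1
    · subst h4
      rw [swap_apply_left, swap_apply_right, tlift_of_gt hf (by omega), tcore_succ]
      simp
    · rw [swap_apply_left, swap_apply_of_ne_of_ne (by omega) (by omega), tlift_of_lt (by omega),
        tcore_step (by omega), ← mul_assoc, ← mul_assoc, hg]
      simp
  by_cases h4 : i + 1 < b
  · rw [swap_apply_of_ne_of_ne (by omega) (by omega), swap_apply_of_ne_of_ne (by omega) (by omega),
      tlift_of_lt hab, tgen_mul_tcore_inner hf (by omega) h4 hb]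
  by_cases h5 : i + 1 = b
  · subst h5
    rw [swap_apply_of_ne_of_ne (by omega) (by omega), swap_apply_right, tlift_of_lt (by omega),
      tgen_mul_tcore_last hf (by omega) hi]
  · obtain rfl : i = b := by omega
    rw [swap_apply_of_ne_of_ne (by omega) (by omega), swap_apply_left, tlift_of_lt (by omega)]
    have hl := tgen_mul_tcore_last hf hab hi
    calc tgen f i * tcore f a i = tgen f i * -(tcore f a i * tgen f i) * tgen f i := by
          rw [mul_neg, neg_mul, mul_assoc, mul_assoc, hg]; simp
      _ = _ := by rw [← hl, ← mul_assoc, hg]; simp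

theorem tgen_mul_tlift (hf : f (zt n) = -1)
    {i a b : ℕ} (hab : a ≠ b) (ha : a < n) (hb : b < n) (hi : i + 1 < n) :
    tgen f i * tlift f a b = -(tlift f (swap i (i + 1) a) (swap i (i + 1) b) * tgen f i) := by
  rcases lt_or_gt_of_ne hab with h | h
  · rw [tlift_of_lt h, tgen_mul_tcore hf h hb hi]
  · rw [tlift_of_gt hf h, mul_neg, tgen_mul_tcore hf h ha hi,
      tlift_antisymm hf ((swap i (i + 1)).injective.ne hab), neg_mul, neg_neg]

theorem swap_lt_of_lt {m i j k : ℕ} (hi : i < m) (hj : j < m) (hk : k < m) : swap i j k < m := by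
  rw [swap_apply_def]
  split_ifs <;> assumption

theorem tcore_mul_tlift (hf : f (zt n) = -1)
    {i j a b : ℕ} (hij : i < j) (hj : j < n) (hab : a ≠ b) (ha : a < n)
    (hb : b < n) :
    tcore f i j * tlift f a b = -(tlift f (swap i j a) (swap i j b) * tcore f i j) := by
  obtain ⟨k, rfl⟩ : ∃ k, j = i + 1 + k := ⟨j - (i + 1), by omega⟩
  clear hij
  induction k generalizing i a b with
  | zero => rw [add_zero, tcore_succ, tgen_mul_tlift hf hab ha hb (by omega)]
  | succ k ih =>
    have e : i + 1 + 1 + k = i + 1 + (k + 1) := by omega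
    have hsw : ∀ c, swap i (i + 1) (swap (i + 1) (i + 1 + (k + 1)) (swap i (i + 1) c)) =
        swap i (i + 1 + (k + 1)) c := by
      intro c
      simp only [swap_apply_def]
      grind
    have hi1 : swap i (i + 1) a < n := swap_lt_of_lt (by omega) (by omega) ha
    have hi2 : swap i (i + 1) b < n := swap_lt_of_lt (by omega) (by omega) hb
    have n1 := (swap i (i + 1)).injective.ne hab
    have := ih (i := i + 1) n1 hi1 hi2 (by omega)
    rw [e] at this
    rw [tcore_step (by omega), mul_assoc, tgen_mul_tlift hf hab ha hb (by omega), mul_neg,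
      mul_assoc,
      ← mul_assoc (tcore f _ _), this, neg_mul, mul_neg, neg_neg, ← mul_assoc, ← mul_assoc,
      tgen_mul_tlift hf ((swap _ _).injective.ne n1) (swap_lt_of_lt (by omega) (by omega) hi1)
        (swap_lt_of_lt (by omega) (by omega) hi2) (by omega), hsw, hsw]
    simp [mul_assoc]

theorem tlift_mul_tlift (hf : f (zt n) = -1)
    {i j a b : ℕ} (hij : i ≠ j) (hi : i < n) (hj : j < n) (hab : a ≠ b)
    (ha : a < n) (hb : b < n) :
    tlift f i j * tlift f a b = -(tlift f (swap i j a) (swap i j b) * tlift f i j) := by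
  rcases lt_or_gt_of_ne hij with h | h
  · rw [tlift_of_lt h, tcore_mul_tlift hf h hj hab ha hb]
  · rw [tlift_of_gt hf h, neg_mul, tcore_mul_tlift hf h hi hab ha hb, swap_comm, mul_neg]

theorem isSpinSystem_tlift (hf : f (zt n) = -1) :
    IsSpinSystem (fun a b : Fin n => tlift f a b) where
  antisymm a b h := tlift_antisymm hf (Fin.val_ne_of_ne h)
  sq a b h := by
    rcases lt_or_gt_of_ne (Fin.val_ne_of_ne h) with h | h
    · simp only [tlift_of_lt h, tcore_mul_self hf h b.2]
    · simp only [tlift_of_gt hf h, neg_mul_neg, tcore_mul_self hf h a.2]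
  anticomm a b c d hab hcd hca hcb hda hdb := by
    have := tlift_mul_tlift hf (Fin.val_ne_of_ne hab) a.2 b.2 (Fin.val_ne_of_ne hcd) c.2 d.2
    rwa [swap_apply_of_ne_of_ne (Fin.val_ne_of_ne hca) (Fin.val_ne_of_ne hcb),
      swap_apply_of_ne_of_ne (Fin.val_ne_of_ne hda) (Fin.val_ne_of_ne hdb)] at this
  cycle a b c hab hca hcb := by
    have := tlift_mul_tlift hf (Fin.val_ne_of_ne hab) a.2 b.2 (Fin.val_ne_of_ne hcb.symm) b.2 c.2
    rw [swap_apply_right, swap_apply_of_ne_of_ne (Fin.val_ne_of_ne hca) (Fin.val_ne_of_ne hcb),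
      ← neg_mul, ← tlift_antisymm hf (Fin.val_ne_of_ne hca.symm)] at this
    exact this

theorem map_ttN (p : SpinSym n →* Perm (Fin n))
    (hpt : ∀ i : Fin (n-1), p (tt n i) = swap (finL n i) (finR n i)) {k : ℕ} (hk : k + 1 < n) :
    p (ttN n k) = swap ⟨k, by omega⟩ ⟨k + 1, hk⟩ := by
  rw [ttN, dif_pos (show k < n - 1 by omega), hpt]
  rfl

theorem map_ttilCore (p : SpinSym n →* Perm (Fin n))
    (hpt : ∀ i : Fin (n-1), p (tt n i) = swap (finL n i) (finR n i)) {i j : Fin n} (h : i < j) :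
    p (ttilCore n i j) = swap i j := by
  obtain ⟨i, hi⟩ := i
  obtain ⟨j, hj⟩ := j
  replace h : i < j := h
  obtain ⟨k, rfl⟩ : ∃ k, j = i + 1 + k := ⟨j - (i + 1), by omega⟩
  clear h
  revert hi hj
  induction k generalizing i with
  | zero => intro hi hj; simp only [add_zero, ttilCore_succ, map_ttN p hpt hj]
  | succ k ih =>
    intro hi hj
    have := ih (i + 1) (by omega) (by omega)
    simp only [show i + 1 + 1 + k = i + 1 + (k + 1) by omega] at this
    change p (ttilCore n i (i + 1 + (k + 1))) = _
    rw [ttilCore_step (by omega), map_mul, map_mul, this, map_ttN p hpt (k := i) (by omega)]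
    have := swap_mul_swap_mul_swap (x := (⟨i + 1 + (k + 1), hj⟩ : Fin n))
      (y := ⟨i + 1, by omega⟩) (z := ⟨i, by omega⟩) (by simp) (by simp; omega)
    rw [swap_comm _ (⟨i, _⟩ : Fin n), swap_comm (⟨i + 1 + (k + 1), _⟩ : Fin n)] at this
    exact this

theorem map_ttil (p : SpinSym n →* Perm (Fin n))
    (hpt : ∀ i : Fin (n-1), p (tt n i) = swap (finL n i) (finR n i)) (hpz : p (zt n) = 1)
    {i j : Fin n} (h : i ≠ j) : p (ttil n i j) = swap i j := by
  rcases lt_or_gt_of_ne h with h | h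
  · rw [ttil, if_neg (by omega), map_ttilCore p hpt h]
  · rw [ttil, if_pos (by omega), map_mul, hpz, one_mul, map_ttilCore p hpt h, swap_comm]

end SpinRelations

section Quotient

variable (n : ℕ)

/-- The class map as a monoid homomorphism. -/
noncomputable def clsHom : SpinSym n →* Ctil n :=
  (RingQuot.mkAlgHom (Lam n) (spinAlgRel n) : _ →* Ctil n).comp
    (MonoidAlgebra.of (Lam n) (SpinSym n))

theorem clsHom_zt : clsHom n (zt n) = -1 := by
  have h := RingQuot.mkAlgHom_rel (Lam n) (s := spinAlgRel n) ⟨rfl, rfl⟩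
  rw [map_add, map_one, map_zero] at h
  exact eq_neg_of_add_eq_zero_left (G := Ctil n) h

variable {n}

theorem linearMap_ext_cls {M : Type*} [AddCommMonoid M] [Module (Lam n) M]
    {φ ψ : Ctil n →ₗ[Lam n] M} (h : ∀ g, φ (cls n g) = ψ (cls n g)) : φ = ψ := by
  refine LinearMap.ext fun u => ?_
  obtain ⟨u, rfl⟩ := RingQuot.mkAlgHom_surjective (Lam n) (spinAlgRel n) u
  have key : φ.comp (RingQuot.mkAlgHom (Lam n) (spinAlgRel n)).toLinearMap =
      ψ.comp (RingQuot.mkAlgHom (Lam n) (spinAlgRel n)).toLinearMap :=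
    MonoidAlgebra.lhom_ext' fun g => LinearMap.ext_ring (h g)
  exact LinearMap.congr_fun key u

end Quotient

theorem differential_squares_to_zero (n : ℕ) (hn : 2 ≤ n) (σO : Equiv.Perm (Fin n))
    (p : SpinSym n →* Equiv.Perm (Fin n))
    (hpt : ∀ i : Fin (n-1), p (tt n i) = Equiv.swap (finL n i) (finR n i))
    (hpz : p (zt n) = 1)
    (D : Ctil n →ₗ[Lam n] Ctil n)
    (hD : ∀ g : SpinSym n,
      D (cls n g) =
        ∑ a : Fin n, ∑ b : Fin n,
          if a ≠ b ∧ RectEmpty n (p g) a b then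
            Umon n σO (p g) a b • cls n (g * ttil n a.val b.val)
          else 0) :
    D.comp D = 0 := by
  refine linearMap_ext_cls fun g => ?_
  have hS := isSpinSystem_tlift (R := Ctil n) (clsHom_zt n)
  have hterm : ∀ a b, D (if a ≠ b ∧ RectEmpty n (p g) a b then
      Umon n σO (p g) a b • cls n (g * ttil n a.val b.val) else 0) =
      ∑ c, ∑ d, cls n g * pairTerm (fun a b : Fin n => tlift (clsHom n) a b) σO (p g) a b c d := by
    intro a b
    split_ifs with h
    · rw [map_smul, hD, Finset.smul_sum]
      refine Finset.sum_congr rfl fun c _ => ?_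
      rw [Finset.smul_sum]
      refine Finset.sum_congr rfl fun d _ => ?_
      rw [map_mul, map_ttil p hpt hpz h.1, pairTerm]
      by_cases h' : c ≠ d ∧ RectEmpty n (p g * swap a b) c d
      · rw [if_pos h', if_pos ⟨h, h'⟩, pairMon, smul_smul, mul_smul_comm]
        congr 1
        exact (map_mul (clsHom n) (g * ttil n a b) (ttil n c d)).trans
          ((congrArg (· * _) (map_mul (clsHom n) g (ttil n a b))).trans (mul_assoc _ _ _))
      · rw [if_neg h', if_neg fun e => h' e.2, smul_zero, mul_zero]
    · rw [map_zero]
      refine (Finset.sum_eq_zero fun c _ => Finset.sum_eq_zero fun d _ => ?_).symm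
      rw [pairTerm, if_neg fun e => h e.1, mul_zero]
  rw [LinearMap.comp_apply, hD, map_sum]
  simp only [map_sum, hterm, ← Finset.mul_sum]
  rw [sum_pairTerm σO (p g) hS hn, mul_zero]
  rfl
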